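/- Let G = *_C G_i be an amalgam of groups, A one of the factors. If A is GTF and C is RTF in A, and each G_i is a copy of A (index set of cardinality ≥ 2), then taking for each factor the family {NSS_A({a}) : a ∈ A \ {1}} of normal subsemigroups yields families satisfying: (1) each family covers G_i \ {1}; (2) the C-intersections of corresponding members agree across factors. Consequently G is GTF. -/

import Mathlib

/-- `g` is a generalized torsion element: `g ≠ 1` and some nonempty finite product of
conjugates of `g` equals `1`. -/
def IsGenTorsion {G : Type*} [Group G] (g : G) : Prop :=
  g ≠ 1 ∧ ∃ l : List G, l ≠ [] ∧ (l.map fun h => h⁻¹ * g * h).prod = 1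

/-- A group is generalized torsion-free if it has no generalized torsion elements. -/
def IsGTF (G : Type*) [Group G] : Prop := ∀ g : G, ¬ IsGenTorsion g

/-- A normal subsemigroup of a group: closed under products and under conjugation by
all elements of the group. -/
def IsNormalSubsemigroup {G : Type*} [Group G] (P : Set G) : Prop :=
  (∀ x ∈ P, ∀ y ∈ P, x * y ∈ P) ∧ ∀ x ∈ P, ∀ g : G, g⁻¹ * x * g ∈ P

/-- `nss G S`: the normal subsemigroup of `G` generated by `S`. -/
def nss (G : Type*) [Group G] (S : Set G) : Set G :=
  {x | ∃ l : List (G × G), l ≠ [] ∧ (∀ p ∈ l, p.1 ∈ S) ∧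
    (l.map fun p => p.2⁻¹ * p.1 * p.2).prod = x}

/-!
Conjugating the copies of `A` by free generators embeds the amalgam into `F ⋊ A`, where `F` is the
free group on copies of the coset space `A ⧸ C`, which `A` permutes. As `A` is GTF, only the
elements `w ≠ 1` of `F` have to be considered: no product of conjugates of translates `a_s • w`, one
for each `s < k`, is trivial.

Replace `w` by a cyclically reduced word of length `L`. If such a product were trivial, cancelling
it would pair the sides of `k` polygons, labelled by the words `a_s • w`, so that they glue to
spheres, and paired sides would have inverse letters. Hence `#edges + 1 ≤ #vertices + #faces`. Call
the position of a side in its word its height. If going around each vertex the height changed, it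
would drop somewhere; such drops are in injection with the edges which do not meet one of the `k`
sides of height `0`, contradicting the inequality. So around some vertex the height is constant, say
`i`. There the successive quotients of the `a_s` multiply to `1`, while each of them moves the
letter at `i + 1` to the different letter at `i`: this contradicts relative torsion-freeness of `C`.

For the inequality, planarity is used in the form that an edge labelling with values in a group
which is trivial around all faces is a difference of values at the vertices (`exists_potential`).
-/

section GeneralizedTorsion

variable {G H : Type*} [Group G] [Group H]

theorem isNormalSubsemigroup_nss (S : Set G) : IsNormalSubsemigroup (nss G S) := by
  constructor
  · rintro x ⟨l, hl, hlS, rfl⟩ y ⟨m, -, hmS, rfl⟩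
    refine ⟨l ++ m, by simp [hl], fun p hp => ?_, by simp⟩
    exact (List.mem_append.1 hp).elim (hlS p) (hmS p)
  · rintro x ⟨l, hl, hlS, rfl⟩ g
    refine ⟨l.map fun p => (p.1, p.2 * g), by simpa using hl, ?_, ?_⟩
    · simpa only [List.forall_mem_map] using hlS
    · have hconj := map_list_prod (MulAut.conj g⁻¹) (l.map fun p => p.2⁻¹ * p.1 * p.2)
      rw [MulAut.conj_apply, inv_inv] at hconj
      rw [hconj, List.map_map, List.map_map]
      simp [Function.comp_def, mul_assoc]

theorem subset_nss (S : Set G) : S ⊆ nss G S :=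
  fun x hx => ⟨[(x, 1)], by simp, by simpa using hx, by simp⟩

theorem IsGTF.one_notMem_nss_singleton (hG : IsGTF G) {a : G} (ha : a ≠ 1) : 1 ∉ nss G {a} := by
  rintro ⟨l, hl, hla, hprod⟩
  refine hG a ⟨ha, l.map Prod.snd, by simpa using hl, ?_⟩
  rw [← hprod, List.map_map]
  exact congrArg List.prod (List.map_congr_left fun p hp => by rw [Function.comp_apply, hla p hp])

theorem IsGTF.setOf_ne_one_eq_biUnion_nss (hG : IsGTF G) :
    {x : G | x ≠ 1} = ⋃ a ∈ {a : G | a ≠ 1}, nss G {a} := by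
  refine Set.Subset.antisymm
    (fun x hx => Set.mem_biUnion (x := x) hx (subset_nss _ (Set.mem_singleton x))) ?_
  refine Set.iUnion₂_subset fun a ha x hx hx1 => ?_
  exact hG.one_notMem_nss_singleton ha (hx1 ▸ hx)

theorem IsGenTorsion.map {g : G} (hg : IsGenTorsion g) (f : G →* H) (hf : f g ≠ 1) :
    IsGenTorsion (f g) := by
  obtain ⟨-, l, hl, hprod⟩ := hg
  refine ⟨hf, l.map f, by simpa using hl, ?_⟩
  rw [← map_one f, ← hprod, map_list_prod, List.map_map, List.map_map]
  simp [Function.comp_def]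

theorem IsGTF.of_injective (hH : IsGTF H) (f : G →* H) (hf : Function.Injective f) : IsGTF G :=
  fun g hg => hH (f g) (hg.map f ((map_ne_one_iff f hf).2 hg.1))

end GeneralizedTorsion

section Matching

variable {X T : Type*}

/-- The inverse of a letter of the free group on `X`, in the encoding of `FreeGroup.mk`. -/
def invLetter (x : X × Bool) : X × Bool := (x.1, !x.2)

theorem mk_singleton_invLetter (x : X × Bool) :
    FreeGroup.mk [invLetter x] = (FreeGroup.mk [x])⁻¹ := by
  simp [invLetter, FreeGroup.inv_mk, FreeGroup.invRev]

theorem exists_cancellation_matching (lab : T → X × Bool) {l : List T}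
    (hl : l.Nodup) (hred : FreeGroup.Red (l.map lab) []) :
    ∃ μ : T → T, Function.Involutive μ ∧ (∀ t ∉ l, μ t = t) ∧
      (∀ t ∈ l, lab (μ t) = invLetter (lab t)) ∧
      ∀ {G : Type*} [Group G] (F : T → G), (∀ t ∈ l, F (μ t) = (F t)⁻¹) → (l.map F).prod = 1 := by
  classical
  generalize hw : l.map lab = w at hred
  induction hred using Relation.ReflTransGen.head_induction_on generalizing l with
  | refl =>
    obtain rfl := List.map_eq_nil_iff.1 hw
    exact ⟨id, fun _ => rfl, fun _ _ => rfl, by simp, by simp⟩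
  | @head w w' hstep _ ih =>
    cases hstep with
    | @not u v x b =>
      obtain ⟨A, _, rfl, hA, hw⟩ := List.map_eq_append_iff.1 hw
      obtain ⟨a, _, rfl, ha, hw⟩ := List.map_eq_cons_iff.1 hw
      obtain ⟨a', B, rfl, ha', hB⟩ := List.map_eq_cons_iff.1 hw
      obtain ⟨hAB, haAB, haAB', hne⟩ :
          (A ++ B).Nodup ∧ a ∉ A ++ B ∧ a' ∉ A ++ B ∧ a ≠ a' := by
        simp only [List.nodup_append, List.nodup_cons, List.mem_cons, List.mem_append] at hl ⊢
        grind
      obtain ⟨μ, hμ, hfix, hlab, hprod⟩ := ih hAB (by rw [List.map_append, hA, hB])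
      have hμa : ∀ t ∈ A ++ B, μ t ≠ a ∧ μ t ≠ a' := fun t ht =>
        ⟨fun h => haAB (by rwa [← hfix a haAB, ← h, hμ t]),
          fun h => haAB' (by rwa [← hfix a' haAB', ← h, hμ t])⟩
      have hνa : Equiv.swap a a' (μ a) = a' := by rw [hfix a haAB, Equiv.swap_apply_left]
      have hνa' : Equiv.swap a a' (μ a') = a := by rw [hfix a' haAB', Equiv.swap_apply_right]
      have hνAB : ∀ t ∈ A ++ B, Equiv.swap a a' (μ t) = μ t := fun t ht =>
        Equiv.swap_apply_of_ne_of_ne (hμa t ht).1 (hμa t ht).2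
      refine ⟨fun t => Equiv.swap a a' (μ t), ?_, ?_, ?_, ?_⟩
      · grind [Function.Involutive]
      · grind
      · intro t ht
        obtain rfl | rfl | ht : t = a ∨ t = a' ∨ t ∈ A ++ B := by grind
        · simp only [hνa, ha, ha', invLetter]
        · simp only [hνa', ha, ha', invLetter, Bool.not_not]
        · simp only [hνAB t ht, hlab t ht]
      · intro G _ F hF
        have hFa : F a' = (F a)⁻¹ := hνa ▸ hF a (by simp)
        have hFAB := hprod F fun t ht => hνAB t ht ▸ hF t (by grind)
        simpa [hFa] using hFAB

end Matching

section Splicing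

variable {X T D J : Type*}

theorem invLetter_ne_self (x : X × Bool) : invLetter x ≠ x := by
  simp [invLetter, Prod.ext_iff]

/-- In `θ'`, the former partners of `a` and `a'` are paired with each other. -/
theorem exists_involutive_pairing {lab : T → X × Bool} {θ : T → T}
    (hθ : Function.Involutive θ) (hlab : Function.Semiconj lab θ invLetter) {a a' : T}
    (ha : lab a' = invLetter (lab a)) :
    ∃ θ' : T → T, Function.Involutive θ' ∧ Function.Semiconj lab θ' invLetter ∧ θ' a = a' ∧
      (∀ t, t ≠ a → t ≠ a' → θ t ≠ a → θ t ≠ a' → θ' t = θ t) ∧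
      ∀ {G : Type*} [Group G] (F : T → G), Function.Semiconj F θ' Inv.inv →
        ∃ F' : T → G, Function.Semiconj F' θ Inv.inv ∧ (∀ t, t ≠ a → t ≠ a' → F' t = F t) ∧
          F' a' = (F' a)⁻¹ := by
  classical
  have haa' : a ≠ a' := fun h => invLetter_ne_self (lab a) (by rw [← ha, ← h])
  have haθ : a ≠ θ a := fun h => invLetter_ne_self (lab a) (by rw [← hlab a, ← h])
  let σ : Equiv.Perm T := Equiv.swap a' (θ a)
  have hσσ : ∀ t, σ (σ t) = t := Equiv.swap_apply_self _ _
  have hσa : σ a = a := Equiv.swap_apply_of_ne_of_ne haa' haθ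
  have hσlab : ∀ t, lab (σ t) = lab t := by
    intro t
    have : lab a' = lab (θ a) := by rw [ha, hlab a]
    grind
  have hθ'a : σ (θ (σ a)) = a' := by rw [hσa, Equiv.swap_apply_right]
  refine ⟨fun t => σ (θ (σ t)), fun t => by simp only [hσσ, hθ (σ t)],
    fun t => by rw [hσlab, hlab, hσlab], hθ'a, by grind [Function.Involutive], ?_⟩
  intro G _ F hF
  let F' : T → G := fun t => if t = a then (F (θ a))⁻¹ else if t = a' then F (θ a) else F t
  have hF'σ : ∀ t, F' (σ t) = F' t := by grind
  have hF' : ∀ t, F' (σ (θ (σ t))) = (F' t)⁻¹ := by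
    intro t
    have hFt : F (σ (θ (σ t))) = (F t)⁻¹ := hF t
    have hθ'a' : σ (θ (σ a')) = a := by rw [Equiv.swap_apply_left, hθ a, hσa]
    have hinj : ∀ {t u}, σ (θ (σ t)) = σ (θ (σ u)) → t = u := fun h =>
      σ.injective (hθ.injective (σ.injective h))
    by_cases hta : t = a
    · simp [F', hta, hθ'a, haa'.symm]
    by_cases hta' : t = a'
    · simp [F', hta', hθ'a', haa'.symm]
    have h₁ : σ (θ (σ t)) ≠ a := fun h => hta' (hinj (h.trans hθ'a'.symm))
    have h₂ : σ (θ (σ t)) ≠ a' := fun h => hta (hinj (h.trans hθ'a.symm))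
    simp only [F', if_neg hta, if_neg hta', if_neg h₁, if_neg h₂, hFt]
  refine ⟨F', fun t => ?_, by grind, by grind⟩
  simpa only [hF'σ, hσσ] using hF' (σ t)

theorem exists_involutive_pairing_finset
    {lab : D ⊕ J × Bool → X × Bool} {μ : D ⊕ J × Bool → D ⊕ J × Bool}
    (hμ : Function.Involutive μ) (hlab : Function.Semiconj lab μ invLetter)
    (hmirror : ∀ j, lab (.inr (j, false)) = invLetter (lab (.inr (j, true)))) (S : Finset J) :
    ∃ θ : D ⊕ J × Bool → D ⊕ J × Bool, Function.Involutive θ ∧ Function.Semiconj lab θ invLetter ∧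
      (∀ j ∈ S, θ (.inr (j, true)) = .inr (j, false)) ∧
      ∀ {G : Type*} [Group G] (F : D ⊕ J × Bool → G), Function.Semiconj F θ Inv.inv →
        ∃ F' : D ⊕ J × Bool → G, Function.Semiconj F' μ Inv.inv ∧
          (∀ d, F' (.inl d) = F (.inl d)) ∧ (∀ j ∉ S, ∀ b, F' (.inr (j, b)) = F (.inr (j, b))) ∧
          ∀ j ∈ S, F' (.inr (j, false)) = (F' (.inr (j, true)))⁻¹ := by
  classical
  induction S using Finset.induction_on with
  | empty => exact ⟨μ, hμ, hlab, by simp, fun F hF => ⟨F, hF, by simp⟩⟩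
  | insert j S hj ih =>
    obtain ⟨θ, hθ, hθlab, hpair, hext⟩ := ih
    obtain ⟨θ', hθ', hθ'lab, hθ'j, hθ'S, hext'⟩ :=
      exists_involutive_pairing hθ hθlab (hmirror j)
    refine ⟨θ', hθ', hθ'lab, ?_, ?_⟩
    · intro i hi
      obtain rfl | hiS := Finset.mem_insert.1 hi
      · exact hθ'j
      · have hij : i ≠ j := fun h => hj (h ▸ hiS)
        rw [hθ'S] <;> simp [hpair i hiS, hij]
    · intro G _ F hF
      obtain ⟨F₁, hF₁, hF₁F, hF₁j⟩ := hext' F hF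
      obtain ⟨F₂, hF₂, hF₂D, hF₂J, hF₂S⟩ := hext F₁ hF₁
      refine ⟨F₂, hF₂, fun d => ?_, fun i hi b => ?_, fun i hi => ?_⟩
      · rw [hF₂D, hF₁F] <;> simp
      · obtain ⟨hij, hiS⟩ : i ≠ j ∧ i ∉ S := by simpa using hi
        rw [hF₂J i hiS, hF₁F] <;> simp [hij]
      · obtain rfl | hiS := Finset.mem_insert.1 hi
        · rw [hF₂J i hj, hF₂J i hj, hF₁j]
        · exact hF₂S i hiS

theorem exists_involutive_splice [Finite J]
    {lab : D ⊕ J × Bool → X × Bool} {μ : D ⊕ J × Bool → D ⊕ J × Bool}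
    (hμ : Function.Involutive μ) (hlab : Function.Semiconj lab μ invLetter)
    (hmirror : ∀ j, lab (.inr (j, false)) = invLetter (lab (.inr (j, true)))) :
    ∃ θ : D → D, Function.Involutive θ ∧ Function.Semiconj (lab ∘ .inl) θ invLetter ∧
      ∀ {G : Type*} [Group G] (F : D → G), Function.Semiconj F θ Inv.inv →
        ∃ F' : D ⊕ J × Bool → G, Function.Semiconj F' μ Inv.inv ∧ (∀ d, F' (.inl d) = F d) ∧
          ∀ j, F' (.inr (j, false)) = (F' (.inr (j, true)))⁻¹ := by
  classical
  have := Fintype.ofFinite J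
  obtain ⟨θ, hθ, hθlab, hpair, hext⟩ :=
    exists_involutive_pairing_finset hμ hlab hmirror Finset.univ
  have hpair' : ∀ j b, θ (.inr (j, b)) = .inr (j, !b) := by
    rintro j (_ | _)
    · rw [Bool.not_false, ← hpair j (Finset.mem_univ j), hθ]
    · exact hpair j (Finset.mem_univ j)
  have hinl : ∀ d, ∃ d', θ (.inl d) = .inl d' := by
    intro d
    rcases h : θ (.inl d) with d' | ⟨j, b⟩
    · exact ⟨d', rfl⟩
    · have := congrArg θ h
      rw [hθ, hpair'] at this
      simp at this
  choose θ' hθ' using hinl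
  refine ⟨θ', fun d => ?_, fun d => ?_, fun {G} _ F hF => ?_⟩
  · exact Sum.inl_injective (β := J × Bool) (by rw [← hθ', ← hθ', hθ])
  · rw [Function.comp_apply, ← hθ', hθlab, Function.comp_apply]
  · have hFθ : Function.Semiconj (Sum.elim F 1 : D ⊕ J × Bool → G) θ Inv.inv := by
      rintro (d | ⟨j, b⟩)
      · simpa [hθ'] using hF d
      · simp [hpair']
    obtain ⟨F', hF', hF'D, -, hF'J⟩ := hext _ hFθ
    exact ⟨F', hF', hF'D, fun j => hF'J j (Finset.mem_univ j)⟩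

end Splicing

section PlanarPairing

variable {X : Type*} {k L : ℕ}

theorem mk_eq_prod_map_mk_singleton (w : List (X × Bool)) :
    FreeGroup.mk w = (w.map fun x => FreeGroup.mk [x]).prod := by
  induction w with
  | nil => rfl
  | cons x w ih => rw [List.map_cons, List.prod_cons, ← ih, FreeGroup.mul_mk, List.singleton_append]

theorem red_nil_of_mk_eq_one {w : List (X × Bool)} (hw : FreeGroup.mk w = 1) :
    FreeGroup.Red w [] := by
  classical
  have hred : FreeGroup.Red w (FreeGroup.reduce w) := FreeGroup.reduce.red
  rwa [← FreeGroup.toWord_mk, hw, FreeGroup.toWord_one] at hred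

/-- A side pairing of `k` polygons with `L` sides each, glueing them to spheres. Planarity is
encoded by its algebraic shadow: whenever the sides are labelled by group elements so that paired
sides have inverse labels, some product of conjugates of the boundary labels of the polygons, one
for each polygon, is trivial. Labels in `Type` are all that is needed. -/
structure IsPlanarPairing (θ : Fin k × Fin L → Fin k × Fin L) : Prop where
  involutive : Function.Involutive θ
  exists_prod_conj_eq_one : ∀ {G : Type} [Group G] (F : Fin k × Fin L → G),
    Function.Semiconj F θ Inv.inv → ∃ g : Fin k → G,
      (List.ofFn fun s => g s * (List.ofFn fun i => F (s, i)).prod * (g s)⁻¹).prod = 1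

/-- Letters of a product of `k` conjugates of words of length `L`: the letters of the `k` words,
and those of the conjugating words, of lengths `n s`, each in two mirrored copies. -/
abbrev ConjLetter (n : Fin k → ℕ) (L : ℕ) : Type :=
  Fin k × Fin L ⊕ (Σ s, Fin (n s)) × Bool

/-- The letters of the `s`-th conjugate in the order in which they are written. -/
def conjBlock (n : Fin k → ℕ) (L : ℕ) (s : Fin k) : List (ConjLetter n L) :=
  (List.ofFn fun j => .inr (⟨s, j⟩, true)) ++ (List.ofFn fun i => .inl (s, i)) ++
    (List.ofFn fun j => .inr (⟨s, j⟩, false)).reverse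

/-- The letters of the whole product of conjugates in the order in which they are written. -/
def conjWord (n : Fin k → ℕ) (L : ℕ) : List (ConjLetter n L) :=
  (List.finRange k).flatMap (conjBlock n L)

theorem mem_conjWord (n : Fin k → ℕ) (t : ConjLetter n L) : t ∈ conjWord n L := by
  rcases t with ⟨s, i⟩ | ⟨⟨s, j⟩, _ | _⟩ <;>
    exact List.mem_flatMap.2 ⟨s, List.mem_finRange s, by simp [conjBlock, List.mem_ofFn]⟩

theorem nodup_conjWord (n : Fin k → ℕ) : (conjWord n L).Nodup := by
  refine List.nodup_flatMap.2 ⟨fun s _ => ?_, (List.nodup_finRange k).imp fun hst => ?_⟩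
  · refine List.nodup_append'.2 ⟨List.nodup_append'.2 ⟨List.nodup_ofFn.2 ?_,
      List.nodup_ofFn.2 ?_, ?_⟩, List.nodup_reverse.2 (List.nodup_ofFn.2 ?_), ?_⟩ <;>
    simp [Function.Injective, List.disjoint_left, List.mem_ofFn]
  · simp only [Function.onFun, List.disjoint_left, conjBlock, List.mem_append, List.mem_reverse,
      List.mem_ofFn]
    grind

theorem prod_map_conjWord {n : Fin k → ℕ} {G : Type*} [Group G] {F : ConjLetter n L → G}
    (hF : ∀ j, F (.inr (j, false)) = (F (.inr (j, true)))⁻¹) :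
    ((conjWord n L).map F).prod =
      (List.ofFn fun s => (List.ofFn fun j => F (.inr (⟨s, j⟩, true))).prod *
        (List.ofFn fun i => F (.inl (s, i))).prod *
          (List.ofFn fun j => F (.inr (⟨s, j⟩, true))).prod⁻¹).prod := by
  have hblock (s : Fin k) : ((conjBlock n L s).map F).prod =
      (List.ofFn fun j => F (.inr (⟨s, j⟩, true))).prod *
        (List.ofFn fun i => F (.inl (s, i))).prod *
          (List.ofFn fun j => F (.inr (⟨s, j⟩, true))).prod⁻¹ := by
    simp only [conjBlock, List.map_append, List.prod_append, List.map_ofFn, List.map_reverse,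
      List.prod_inv_reverse, Function.comp_def, hF]
  simp only [← hblock]
  simp only [conjWord, List.flatMap_def, List.map_flatten, List.prod_flatten, List.map_map,
    List.ofFn_eq_map, Function.comp_def]

theorem exists_isPlanarPairing (lab : Fin k × Fin L → X × Bool) (H : Fin k → FreeGroup X)
    (hprod : (List.ofFn fun s =>
      H s * FreeGroup.mk (List.ofFn fun i => lab (s, i)) * (H s)⁻¹).prod = 1) :
    ∃ θ, IsPlanarPairing θ ∧ Function.Semiconj lab θ invLetter := by
  classical
  let n (s : Fin k) : ℕ := (H s).toWord.length
  let conjLab (j : Σ s, Fin (n s)) : X × Bool := (H j.1).toWord.get j.2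
  let lab' : ConjLetter n L → X × Bool :=
    Sum.elim lab fun j => if j.2 then conjLab j.1 else invLetter (conjLab j.1)
  have hmirror (j) : lab' (.inr (j, false)) = invLetter (lab' (.inr (j, true))) := by
    simp [lab']
  have hconj (s) : (List.ofFn fun j => FreeGroup.mk [lab' (.inr (⟨s, j⟩, true))]).prod = H s := by
    have hmk := mk_eq_prod_map_mk_singleton (H s).toWord
    rw [FreeGroup.mk_toWord] at hmk
    conv_rhs => rw [hmk, ← List.ofFn_get (H s).toWord, List.map_ofFn]
    rfl
  have hface (s) : (List.ofFn fun i => FreeGroup.mk [lab' (.inl (s, i))]).prod =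
      FreeGroup.mk (List.ofFn fun i => lab (s, i)) := by
    rw [mk_eq_prod_map_mk_singleton, List.map_ofFn]
    rfl
  have hred : FreeGroup.Red ((conjWord n L).map lab') [] := by
    refine red_nil_of_mk_eq_one ?_
    rw [mk_eq_prod_map_mk_singleton, List.map_map,
      prod_map_conjWord fun j => by simp [hmirror, mk_singleton_invLetter], ← hprod]
    simp only [Function.comp_apply, hconj, hface]
  obtain ⟨μ, hμ, -, hμlab, hμprod⟩ :=
    exists_cancellation_matching lab' (nodup_conjWord n) hred
  obtain ⟨θ, hθ, hθlab, hext⟩ :=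
    exists_involutive_splice hμ (fun t => hμlab t (mem_conjWord n t)) hmirror
  refine ⟨θ, ⟨hθ, fun {G} _ F hF => ?_⟩, hθlab⟩
  obtain ⟨F', hF', hF'D, hF'J⟩ := hext F hF
  refine ⟨fun s => (List.ofFn fun j => F' (.inr (⟨s, j⟩, true))).prod, ?_⟩
  simpa only [prod_map_conjWord hF'J, hF'D] using hμprod F' fun t _ => hF' t

end PlanarPairing

section Potential

variable {M Q : Type*} [CommGroup M] [Group Q] {k L : ℕ}

theorem left_prod_ofFn (F : Fin L → M ≀ᵣ Q) (x : Q) :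
    (List.ofFn F).prod.left x =
      ∏ i : Fin L, (F i).left ((Fin.partialProd (fun j => (F j).right) i.castSucc)⁻¹ * x) := by
  induction L generalizing x with
  | zero => simp
  | succ n ih =>
    simp only [List.ofFn_succ, List.prod_cons, RegularWreathProduct.mul_left, Pi.mul_apply, ih,
      Fin.prod_univ_succ]
    simp [Fin.partialProd_succ', ← mul_assoc, Fin.tail_def]

theorem left_prod_conj_ofFn {w : Fin k → M ≀ᵣ Q} (hw : ∀ s, (w s).right = 1) (g : Fin k → M ≀ᵣ Q)
    (x : Q) : (List.ofFn fun s => g s * w s * (g s)⁻¹).prod.left x =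
      ∏ s, (w s).left ((g s).right⁻¹ * x) := by
  rw [left_prod_ofFn]
  simp [hw, Fin.partialProd, List.ofFn_const]

theorem right_prod_ofFn {N : Type*} [Group N] (F : Fin L → N ≀ᵣ Q) :
    (List.ofFn F).prod.right = (List.ofFn fun i => (F i).right).prod :=
  (map_list_prod RegularWreathProduct.rightHom _).trans (by rw [List.map_ofFn]; rfl)

theorem partialProd_sub_one_succ {N : Type*} [Monoid N] [NeZero L] {f : Fin L → N}
    (hf : (List.ofFn f).prod = 1) (i : Fin L) :
    Fin.partialProd f (i - 1).succ = Fin.partialProd f i.castSucc := by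
  obtain ⟨n, rfl⟩ := Nat.exists_eq_succ_of_ne_zero (NeZero.ne L)
  induction i using Fin.cases with
  | zero =>
    have hlast : ((0 : Fin (n + 1)) - 1).succ = Fin.last (n + 1) :=
      Fin.ext (by rw [zero_sub, Fin.val_succ, Fin.coe_neg_one, Fin.val_last])
    rw [hlast, Fin.castSucc_zero, Fin.partialProd_zero, Fin.partialProd, Fin.val_last,
      List.take_of_length_le (by simp), hf]
  | succ i =>
    have : i.succ - 1 = i.castSucc := by rw [sub_eq_iff_eq_add, Fin.coeSucc_eq_succ]
    rw [this, Fin.succ_castSucc]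

theorem eq_of_sum_single_eq {D V : Type*} [Fintype D] {p q : D → V}
    (h : ∑ d, Finsupp.single (d, p d) (1 : ℤ) = ∑ d, Finsupp.single (d, q d) 1) (d : D) :
    p d = q d := by
  classical
  have heval := DFunLike.congr_fun h (d, p d)
  simpa [Finsupp.finsetSum_apply, Finsupp.single_apply, ite_and, eq_comm] using heval

/-- The side that precedes, on the same polygon, the side paired with `d`. When the polygons are
glued along `θ`, the sides of an orbit end in the same vertex. -/
def nextSide [NeZero L] (θ : Fin k × Fin L → Fin k × Fin L) (d : Fin k × Fin L) : Fin k × Fin L :=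
  ((θ d).1, (θ d).2 - 1)

/-- The potential is read off the planarity relation in a wreath product, where the labels `f` are
lifted so that the `M`-component of the relation says in which positions each side occurs. -/
theorem IsPlanarPairing.exists_potential {Q : Type} [Group Q] [NeZero L]
    {θ : Fin k × Fin L → Fin k × Fin L} (hθ : IsPlanarPairing θ) {f : Fin k × Fin L → Q}
    (hf : Function.Semiconj f θ Inv.inv) (hface : ∀ s, (List.ofFn fun i => f (s, i)).prod = 1) :
    ∃ P : Fin k × Fin L → Q, (∀ d, P d = P (d.1, d.2 - 1) * f d) ∧
      ∀ d, P (nextSide θ d) = P d := by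
  let m (d : Fin k × Fin L) (q : Q) : Multiplicative ((Fin k × Fin L) × Q →₀ ℤ) :=
    .ofAdd (.single (d, q) 1)
  let F (d : Fin k × Fin L) : Multiplicative ((Fin k × Fin L) × Q →₀ ℤ) ≀ᵣ Q :=
    ⟨fun x => m d x⁻¹ / m (θ d) (x⁻¹ * f d), f d⟩
  have hF : Function.Semiconj F θ Inv.inv := by
    intro d
    ext1
    · funext x
      simp [F, hθ.involutive d, hf.eq d]
    · exact hf d
  obtain ⟨g, hg⟩ := hθ.exists_prod_conj_eq_one F hF
  let P (d : Fin k × Fin L) : Q := (g d.1).right * Fin.partialProd (fun i => f (d.1, i)) d.2.succ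
  have hP_sub_one (d : Fin k × Fin L) : P (d.1, d.2 - 1) =
      (g d.1).right * Fin.partialProd (fun i => f (d.1, i)) d.2.castSucc := by
    simp only [P, partialProd_sub_one_succ (hface d.1)]
  have hP (d : Fin k × Fin L) : P d = P (d.1, d.2 - 1) * f d := by
    rw [hP_sub_one, mul_assoc, ← Fin.partialProd_succ]
  have hleft (d : Fin k × Fin L) : m d (P (d.1, d.2 - 1)) / m (θ d) (P d) = (F d).left
      ((Fin.partialProd (fun i => f (d.1, i)) d.2.castSucc)⁻¹ * ((g d.1).right⁻¹ * 1)) := by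
    rw [hP d, hP_sub_one d]
    simp [F, mul_assoc]
  have hprod : ∏ d, m d (P (d.1, d.2 - 1)) = ∏ d, m (θ d) (P d) := by
    rw [← div_eq_one, ← Finset.prod_div_distrib, Fintype.prod_prod_type]
    simp only [hleft]
    have hg_left := congrFun (congrArg RegularWreathProduct.left hg) 1
    rw [left_prod_conj_ofFn fun s => (right_prod_ofFn _).trans (hface s)] at hg_left
    simp only [left_prod_ofFn] at hg_left
    exact hg_left
  have hprod_comp : ∏ d, m (θ d) (P d) = ∏ d, m d (P (θ d)) :=
    Fintype.prod_equiv (hθ.involutive.toPerm θ) _ _ fun d => by simp [hθ.involutive d]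
  have hPθ := eq_of_sum_single_eq (congrArg Multiplicative.toAdd (hprod.trans hprod_comp))
  exact ⟨P, hP, fun d => by rw [nextSide, hPθ, hθ.involutive d]⟩

end Potential

section EulerCharacteristic

variable {k L : ℕ}

theorem finrank_add_one_le_ncard_of_vectorSpan_eq_top {K V : Type*} [DivisionRing K]
    [AddCommGroup V] [Module K V] {s : Set V} (hs : s.Finite) (hs₀ : s.Nonempty)
    (hspan : vectorSpan K s = ⊤) : Module.finrank K V + 1 ≤ s.ncard := by
  have := hs.fintype
  have := hs₀.to_subtype
  have hle := finrank_vectorSpan_range_add_one_le K ((↑) : s → V)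
  rwa [Subtype.range_coe, hspan, finrank_top, Fintype.card_eq_nat_card, Nat.card_coe_set_eq] at hle

theorem card_le_finrank_quotient_add_card {K ι κ : Type*} [DivisionRing K] [Fintype ι] [Fintype κ]
    (v : κ → ι → K) :
    Fintype.card ι ≤
      Module.finrank K ((ι → K) ⧸ Submodule.span K (Set.range v)) + Fintype.card κ := by
  rw [← Module.finrank_fintype_fun_eq_card K (η := ι),
    ← Submodule.finrank_quotient_add_finrank (Submodule.span K (Set.range v))]
  exact Nat.add_le_add_left (finrank_range_le_card v) _

theorem vectorSpan_range_eq_top {K ι D : Type*} [DivisionRing K] [Finite ι] [DecidableEq ι]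
    {N : Submodule K (ι → K)} {P : D → (ι → K) ⧸ N}
    (hP : ∀ i, N.mkQ (Pi.single i 1) ∈ vectorSpan K (Set.range P)) :
    vectorSpan K (Set.range P) = ⊤ := by
  have hspan := congrArg (Submodule.map N.mkQ) (Pi.basisFun K ι).span_eq
  rw [Submodule.map_span, Submodule.map_top, Submodule.range_mkQ] at hspan
  rw [eq_top_iff, ← hspan, Submodule.span_le]
  rintro _ ⟨_, ⟨i, rfl⟩, rfl⟩
  rw [Pi.basisFun_apply]
  exact hP i

/-- The inequality `#edges + 1 ≤ #vertices + #faces` for the glued surface: the vertices are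
counted by the values of `P`, the edges by the transversal `E` of the pairing. -/
theorem IsPlanarPairing.exists_card_add_one_le [NeZero k] [NeZero L]
    {θ : Fin k × Fin L → Fin k × Fin L} (hθ : IsPlanarPairing θ) (E : Finset (Fin k × Fin L))
    (hE : ∀ d ∈ E, θ d ∉ E) : ∃ (V : Type) (P : Fin k × Fin L → V),
      (∀ d, P (nextSide θ d) = P d) ∧ E.card + 1 ≤ (Set.range P).ncard + k := by
  classical
  let edge (d : Fin k × Fin L) : E → ℚ :=
    fun e => (if e.1 = d then 1 else 0) - if e.1 = θ d then 1 else 0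
  have hedge_odd (d) : edge (θ d) = -edge d := by
    ext e
    simp [edge, hθ.involutive d]
  have hedge_single (e : E) : edge e = Pi.single e 1 := by
    ext e'
    have he' : e'.1 ≠ θ e := fun h => hE e e.2 (h ▸ e'.2)
    simp [edge, he', Pi.single_apply]
  let face (s : Fin k) : E → ℚ := ∑ i, edge (s, i)
  let N : Submodule ℚ (E → ℚ) := Submodule.span ℚ (Set.range face)
  let f (d : Fin k × Fin L) : Multiplicative ((E → ℚ) ⧸ N) := .ofAdd (N.mkQ (edge d))
  have hf : Function.Semiconj f θ Inv.inv := fun d => by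
    simp only [f, hedge_odd, map_neg, ofAdd_neg]
  have hface (s) : (List.ofFn fun i => f (s, i)).prod = 1 := by
    rw [List.prod_ofFn, ← ofAdd_sum, ← map_sum]
    exact congrArg Multiplicative.ofAdd
      ((Submodule.Quotient.mk_eq_zero N).2 (Submodule.subset_span ⟨s, rfl⟩))
  obtain ⟨P, hPf, hPθ⟩ := hθ.exists_potential hf hface
  let P' (d : Fin k × Fin L) : (E → ℚ) ⧸ N := (P d).toAdd
  have hdiff (d) : N.mkQ (edge d) = P' d - P' (d.1, d.2 - 1) :=
    eq_sub_of_add_eq' (congrArg Multiplicative.toAdd (hPf d)).symm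
  have hspan : vectorSpan ℚ (Set.range P') = ⊤ := vectorSpan_range_eq_top fun e => by
    rw [← hedge_single, hdiff]
    exact vsub_mem_vectorSpan ℚ (Set.mem_range_self _) (Set.mem_range_self _)
  have hvertices := finrank_add_one_le_ncard_of_vectorSpan_eq_top (Set.finite_range P')
    (Set.range_nonempty P') hspan
  have hfaces : Fintype.card E ≤ Module.finrank ℚ ((E → ℚ) ⧸ N) + Fintype.card (Fin k) :=
    card_le_finrank_quotient_add_card face
  rw [Fintype.card_coe, Fintype.card_fin] at hfaces
  exact ⟨_, P', hPθ, by omega⟩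

theorem injective_nextSide [NeZero L] {θ : Fin k × Fin L → Fin k × Fin L}
    (hθ : Function.Injective θ) : Function.Injective (nextSide θ) := fun _ _ h =>
  have ⟨hfst, hsnd⟩ := Prod.mk.inj h
  hθ (Prod.ext hfst (sub_left_injective hsnd))

theorem exists_iterate_lt {D α : Type*} [Finite D] [LinearOrder α] {ν : D → D}
    (hν : Function.Injective ν) (h : D → α) {d : D} (hd : ¬ ∀ n, h (ν^[n] d) = h d) :
    ∃ n, h (ν (ν^[n] d)) < h (ν^[n] d) := by
  contrapose! hd
  have hmono : Monotone fun n => h (ν^[n] d) :=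
    monotone_nat_of_le_succ fun n => by simpa only [Function.iterate_succ_apply'] using hd n
  obtain ⟨N, hN, hper⟩ := hν.mem_periodicPts d
  refine fun n => le_antisymm ?_ (hmono (Nat.zero_le n))
  have hle := hmono (Nat.le_mul_of_pos_left n hN)
  have hper_mul : ν^[N * n] d = d := hper.mul_const n
  simpa only [hper_mul] using hle

theorem ncard_range_le_card_of_iterate_mem {D V : Type*} {ν : D → D} {P : D → V}
    (hP : ∀ d, P (ν d) = P d) {S : Finset D} (hS : ∀ d, ∃ n, ν^[n] d ∈ S) :
    (Set.range P).ncard ≤ S.card := by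
  classical
  have hP_iterate (n d) : P (ν^[n] d) = P d :=
    congrFun (Function.iterate_invariant (funext hP) n) d
  rw [← Set.ncard_coe_finset]
  refine (Set.ncard_le_ncard ?_ (S.finite_toSet.image P)).trans (Set.ncard_image_le S.finite_toSet)
  rintro _ ⟨d, rfl⟩
  obtain ⟨n, hn⟩ := hS d
  exact ⟨_, hn, hP_iterate n d⟩

theorem snd_nextSide_lt_iff [NeZero L] {θ : Fin k × Fin L → Fin k × Fin L} {d : Fin k × Fin L}
    (hne : (θ d).2 ≠ d.2) : (nextSide θ d).2 < d.2 ↔ (θ d).2 ≠ 0 ∧ (θ d).2 < d.2 := by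
  obtain ⟨n, rfl⟩ := Nat.exists_eq_succ_of_ne_zero (NeZero.ne L)
  by_cases h₀ : (θ d).2 = 0
  · simp only [nextSide, h₀, zero_sub, Fin.lt_def, Fin.coe_neg_one, ne_eq, not_true, false_and,
      iff_false]
    omega
  · rw [nextSide, Fin.lt_def, Fin.lt_def, Fin.val_sub_one_of_ne_zero h₀]
    have hval : ((θ d).2 : ℕ) ≠ d.2 := Fin.val_ne_of_ne hne
    simp only [ne_eq, h₀, not_false_eq_true, true_and]
    omega

theorem IsPlanarPairing.exists_snd_iterate_nextSide_eq [NeZero k] [NeZero L]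
    {θ : Fin k × Fin L → Fin k × Fin L} (hθ : IsPlanarPairing θ) (hne : ∀ d, (θ d).2 ≠ d.2) :
    ∃ d, ∀ n, ((nextSide θ)^[n] d).2 = d.2 := by
  classical
  by_contra! hdescent
  let E : Finset (Fin k × Fin L) := {d | d.2 < (θ d).2}
  let descents : Finset (Fin k × Fin L) := {d | (nextSide θ d).2 < d.2}
  have hE : ∀ d ∈ E, θ d ∉ E := fun d hd => by
    simpa [E, hθ.involutive d] using (Finset.mem_filter.1 hd).2.le
  obtain ⟨V, P, hP, hEuler⟩ := hθ.exists_card_add_one_le E hE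
  have hvertices : (Set.range P).ncard ≤ descents.card :=
    ncard_range_le_card_of_iterate_mem hP fun d => by
      obtain ⟨n, hn⟩ := exists_iterate_lt (injective_nextSide hθ.involutive.injective) Prod.snd
        (d := d) (by simpa using hdescent d)
      exact ⟨n, by simpa [descents] using hn⟩
  have hdescents : descents.card ≤ (E.filter fun d => d.2 ≠ 0).card :=
    Finset.card_le_card_of_injOn θ (fun d hd => by
      simpa [E, hθ.involutive d, and_comm, descents, snd_nextSide_lt_iff (hne d)] using hd)
      hθ.involutive.injective.injOn
  have hinitial : k ≤ (E.filter fun d => ¬ d.2 ≠ 0).card := by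
    refine (Fintype.card_fin k).symm.le.trans (Finset.card_le_card_of_injOn (fun s => (s, 0))
      (fun s _ => ?_) fun s _ t _ h => congrArg Prod.fst h)
    simpa [E] using Fin.pos_iff_ne_zero.2 (hne (s, 0))
  have hcard := E.card_filter_add_card_filter_not fun d => d.2 ≠ 0
  omega

end EulerCharacteristic

section FreeGroupAction

variable {A X Y : Type*} [Group A] [MulAction A Y]

variable (A Y) in
/-- The action on a free group induced by an action on the free generators. -/
def freeGroupAut : A →* MulAut (FreeGroup Y) where
  toFun a := FreeGroup.freeGroupCongr (MulAction.toPerm a)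
  map_one' := MulEquiv.toMonoidHom_injective (FreeGroup.ext_hom _ _ fun y => by simp)
  map_mul' a b := MulEquiv.toMonoidHom_injective
    (FreeGroup.ext_hom _ _ fun y => by simp [mul_smul])

theorem freeGroupAut_mk (a : A) (u : List (Y × Bool)) :
    freeGroupAut A Y a (FreeGroup.mk u) = FreeGroup.mk (u.map fun x => (a • x.1, x.2)) := rfl

variable (A Y) in
/-- The form that relative torsion-freeness of a subgroup of `A` takes for the action on its
cosets: elements which all move a point to the same other point have no trivial product. -/
def IsRTFAction : Prop :=
  ∀ x y : Y, x ≠ y → ∀ l : List A, l ≠ [] → (∀ a ∈ l, a • x = y) → l.prod ≠ 1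

theorem snd_getElem_add_one_eq {u : List (X × Bool)} (hu : FreeGroup.IsCyclicallyReduced u)
    [NeZero u.length] (i : Fin u.length) (h : (u[i]).1 = (u[i + 1]).1) :
    (u[i]).2 = (u[i + 1]).2 := by
  by_cases hi : (i : ℕ) + 1 < u.length
  · simp only [Fin.getElem_fin, Fin.val_add_one_of_lt' hi] at h ⊢
    exact List.isChain_iff_getElem.1 hu.isReduced i hi h
  · have hlast : (i : ℕ) + 1 = u.length := by omega
    have hwrap : ((i + 1 : Fin u.length) : ℕ) = 0 := by
      rw [Fin.val_add, Fin.val_one', Nat.add_mod_mod, hlast, Nat.mod_self]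
    simp only [Fin.getElem_fin, hwrap] at h ⊢
    refine hu.2 _ ?_ _ ?_ h
    · simp [List.getLast?_eq_getElem?, ← hlast]
    · simp [List.head?_eq_getElem?, NeZero.pos]

theorem exists_eq_conj_mk_isCyclicallyReduced {w : FreeGroup X} (hw : w ≠ 1) :
    ∃ (v : FreeGroup X) (u : List (X × Bool)),
      u ≠ [] ∧ FreeGroup.IsCyclicallyReduced u ∧ w = v * FreeGroup.mk u * v⁻¹ := by
  classical
  have hconj : w = FreeGroup.mk (FreeGroup.reduceCyclically.conjugator w.toWord) *
      FreeGroup.mk (FreeGroup.reduceCyclically w.toWord) *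
        (FreeGroup.mk (FreeGroup.reduceCyclically.conjugator w.toWord))⁻¹ := by
    rw [FreeGroup.inv_mk, FreeGroup.mul_mk, FreeGroup.mul_mk,
      FreeGroup.reduceCyclically.conj_conjugator_reduceCyclically, FreeGroup.mk_toWord]
  refine ⟨_, _, fun hnil => hw ?_,
    FreeGroup.reduceCyclically.isCyclicallyReduced FreeGroup.isReduced_toWord, hconj⟩
  rw [hconj, hnil, ← FreeGroup.one_eq_mk, mul_one, mul_inv_cancel]

/-- Along a vertex of constant height, the polygons are translated by elements whose successive
quotients all move a letter of `u` to its predecessor. -/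
theorem IsRTFAction.exists_snd_iterate_nextSide_ne (hY : IsRTFAction A Y) {k : ℕ}
    {u : List (Y × Bool)} [NeZero u.length] (hu : FreeGroup.IsCyclicallyReduced u) (a : Fin k → A)
    {θ : Fin k × Fin u.length → Fin k × Fin u.length} (hθ : Function.Injective θ)
    (hlab : Function.Semiconj (fun d => (a d.1 • (u[d.2]).1, (u[d.2]).2)) θ invLetter)
    (d : Fin k × Fin u.length) : ∃ n, ((nextSide θ)^[n] d).2 ≠ d.2 := by
  by_contra! hconst
  let b (n : ℕ) : A := a ((nextSide θ)^[n] d).1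
  have hθ_iterate (n : ℕ) :
      θ ((nextSide θ)^[n] d) = (((nextSide θ)^[n + 1] d).1, d.2 + 1) := by
    have hsnd := hconst (n + 1)
    rw [Function.iterate_succ_apply'] at hsnd ⊢
    exact Prod.ext rfl (sub_eq_iff_eq_add.1 hsnd)
  have hletter (n : ℕ) : (b (n + 1) • (u[d.2 + 1]).1, (u[d.2 + 1]).2) =
      invLetter (b n • (u[d.2]).1, (u[d.2]).2) := by
    have hsemi := hlab.eq ((nextSide θ)^[n] d)
    simp only [hθ_iterate] at hsemi
    simpa only [hconst] using hsemi
  have hne : (u[d.2 + 1]).1 ≠ (u[d.2]).1 := fun h => by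
    have hsign : (u[d.2 + 1]).2 = !(u[d.2]).2 := congrArg Prod.snd (hletter 0)
    simpa using (snd_getElem_add_one_eq hu d.2 h.symm).trans hsign
  have hsmul (n : ℕ) : ((b n)⁻¹ / (b (n + 1))⁻¹) • (u[d.2 + 1]).1 = (u[d.2]).1 := by
    rw [div_inv_eq_mul, mul_smul, inv_smul_eq_iff]
    exact congrArg Prod.fst (hletter n)
  obtain ⟨N, hN, hper⟩ := (injective_nextSide hθ).mem_periodicPts d
  have hbN : b N = b 0 := congrArg (fun d' : Fin k × Fin u.length => a d'.1) hper
  refine hY _ _ hne ((List.range N).map fun n => (b n)⁻¹ / (b (n + 1))⁻¹) (by simpa using hN.ne')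
    (fun c hc => ?_) (by rw [List.prod_range_div' N fun n => (b n)⁻¹, hbN, div_self'])
  obtain ⟨n, -, rfl⟩ := List.mem_map.1 hc
  exact hsmul n

theorem IsRTFAction.prod_conj_freeGroupAut_ne_one (hY : IsRTFAction A Y) {w : FreeGroup Y}
    (hw : w ≠ 1) {l : List (FreeGroup Y ⋊[freeGroupAut A Y] A)} (hl : l ≠ []) :
    (l.map fun h => h.left * freeGroupAut A Y h.right w * h.left⁻¹).prod ≠ 1 := by
  obtain ⟨v, u, hu₀, hu, rfl⟩ := exists_eq_conj_mk_isCyclicallyReduced hw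
  have : NeZero u.length := ⟨by simpa using hu₀⟩
  have : NeZero l.length := ⟨by simpa using hl⟩
  have hword (s : Fin l.length) :
      FreeGroup.mk (List.ofFn fun i : Fin u.length => ((l[s]).right • (u[i]).1, (u[i]).2)) =
        freeGroupAut A Y (l[s]).right (FreeGroup.mk u) :=
    congrArg FreeGroup.mk (List.ofFn_getElem_eq_map u fun x => ((l[s]).right • x.1, x.2))
  intro hprod
  obtain ⟨θ, hθ, hlab⟩ := exists_isPlanarPairing
    (fun d : Fin l.length × Fin u.length => ((l[d.1]).right • (u[d.2]).1, (u[d.2]).2))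
    (fun s => (l[s]).left * freeGroupAut A Y (l[s]).right v) (by
      rw [← hprod, ← List.ofFn_getElem_eq_map]
      refine congrArg _ (congrArg _ (funext fun s => ?_))
      simp only [hword]
      simp only [Fin.getElem_fin, map_mul, map_inv, mul_inv_rev, mul_assoc])
  obtain ⟨d, hd⟩ := hθ.exists_snd_iterate_nextSide_eq fun d h => by
    have hsign := congrArg Prod.snd (hlab.eq d)
    simp [h, invLetter] at hsign
  obtain ⟨n, hn⟩ := hY.exists_snd_iterate_nextSide_ne hu (fun s => (l[s]).right)
    hθ.involutive.injective hlab d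
  exact hn (hd n)

theorem inv_mul_inl_mul {N : Type*} [Group N] {φ : A →* MulAut N} (h : N ⋊[φ] A) (n : N) :
    h⁻¹ * SemidirectProduct.inl n * h =
      SemidirectProduct.inl (h⁻¹.left * φ h⁻¹.right n * h⁻¹.left⁻¹) := by
  ext1 <;> simp

theorem IsRTFAction.not_isGenTorsion_inl (hY : IsRTFAction A Y) (w : FreeGroup Y) :
    ¬ IsGenTorsion (SemidirectProduct.inl w : FreeGroup Y ⋊[freeGroupAut A Y] A) := by
  rintro ⟨hw, l, hl, hprod⟩
  refine hY.prod_conj_freeGroupAut_ne_one (w := w) (l := l.map (·⁻¹))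
    (fun h => hw (by rw [h, map_one])) (by simpa using hl)
    (SemidirectProduct.inl_injective (φ := freeGroupAut A Y) ?_)
  rw [map_one, ← hprod, map_list_prod]
  simp only [List.map_map, Function.comp_def, inv_mul_inl_mul]

theorem IsGTF.semidirectProduct_freeGroupAut (hA : IsGTF A) (hY : IsRTFAction A Y) :
    IsGTF (FreeGroup Y ⋊[freeGroupAut A Y] A) := by
  intro g hg
  by_cases hright : g.right = 1
  · refine hY.not_isGenTorsion_inl g.left ?_
    rwa [show SemidirectProduct.inl g.left = g from SemidirectProduct.ext rfl hright.symm]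
  · exact hA _ (hg.map SemidirectProduct.rightHom hright)

end FreeGroupAction

section Amalgam

variable {A G H I : Type*} [Group A] [Group G] [Group H]

/-- `C` is relatively torsion-free in `A`. -/
def IsRTF (C : Subgroup A) : Prop :=
  ∀ g : A, g ∉ C → ∀ l : List A, l ≠ [] → (∀ c ∈ l, c ∈ C) → (l.map fun c => g * c).prod ≠ 1

theorem IsRTF.isRTFAction_sigma_quotient {C : Subgroup A} (hC : IsRTF C) (I : Type*) :
    IsRTFAction A (Σ _ : I, A ⧸ C) := by
  rintro ⟨i, ⟨g⟩⟩ ⟨j, ⟨g'⟩⟩ hne l hl hmove hprod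
  have hmem (a : A) (ha : a ∈ l) : i = j ∧ g'⁻¹ * (a * g) ∈ C := by
    obtain ⟨rfl, hcoset⟩ := Sigma.ext_iff.1 (hmove a ha)
    exact ⟨rfl, QuotientGroup.eq.1 (eq_of_heq hcoset).symm⟩
  obtain ⟨a, ha⟩ := List.exists_mem_of_ne_nil l hl
  obtain ⟨rfl, -⟩ := hmem a ha
  have hg : g⁻¹ * g' ∉ C := fun h => hne (congrArg (Sigma.mk i) (QuotientGroup.eq.2 h))
  refine hC _ hg (l.map fun a => g'⁻¹ * (a * g)) (by simpa using hl)
    (by simpa using fun a ha => (hmem a ha).2) ?_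
  have hconj := map_list_prod (MulAut.conj g⁻¹) l
  rw [hprod, map_one] at hconj
  rw [hconj, List.map_map]
  exact congrArg List.prod (List.map_congr_left fun a _ => by simp [mul_assoc])

/-- The semidirect product of `A` and the free group on a family, indexed by `I`, of copies of the
coset space of `C`. -/
abbrev CosetSemidirectProduct (C : Subgroup A) (I : Type*) : Type _ :=
  FreeGroup (Σ _ : I, A ⧸ C) ⋊[freeGroupAut A (Σ _ : I, A ⧸ C)] A

/-- The free generator at the trivial coset in the `i`-th copy of the coset space. -/
def baseCosetGen (C : Subgroup A) (i : I) : CosetSemidirectProduct C I :=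
  SemidirectProduct.inl (FreeGroup.of ⟨i, (1 : A)⟩)

theorem exists_lift_cosetSemidirectProduct {C : Subgroup A} (f : A →* H) (t : I → H)
    (ht : ∀ i, ∀ c ∈ C, Commute (f c) (t i)) :
    ∃ Ψ : CosetSemidirectProduct C I →* H,
      (∀ a, Ψ (SemidirectProduct.inr a) = f a) ∧ ∀ i, Ψ (baseCosetGen C i) = t i := by
  let conjugate (i : I) : A ⧸ C → H :=
    Quotient.lift (fun a => MulAut.conj (f a) (t i)) fun a b hab => by
      have hcomm := ht i _ (QuotientGroup.leftRel_apply.1 hab)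
      rw [← mul_inv_cancel_left a b, map_mul, map_mul, MulAut.mul_apply,
        MulAut.conj_apply (f (a⁻¹ * b)), hcomm.eq, mul_inv_cancel_right]
  have hconjugate (i : I) (a : A) : conjugate i a = MulAut.conj (f a) (t i) := rfl
  refine ⟨SemidirectProduct.lift (FreeGroup.lift fun y => conjugate y.1 y.2) f fun a =>
    FreeGroup.ext_hom _ _ ?_, fun a => SemidirectProduct.lift_inr .., fun i => ?_⟩
  · rintro ⟨i, ⟨b⟩⟩
    change FreeGroup.lift _ (FreeGroup.of _) = MulAut.conj (f a) (FreeGroup.lift _ (FreeGroup.of _))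
    rw [FreeGroup.lift_apply_of, FreeGroup.lift_apply_of]
    change MulAut.conj (f (a * b)) (t i) = MulAut.conj (f a) (MulAut.conj (f b) (t i))
    rw [map_mul, map_mul, MulAut.mul_apply]
  · rw [baseCosetGen, SemidirectProduct.lift_inl, FreeGroup.lift_apply_of, hconjugate, map_one,
      map_one, MulAut.one_apply]

/-- The endomorphism of an amalgam of copies of one group induced by a self-map of the indices. -/
def reindexCopies (φ : H →* G) (e : I → I) :
    Monoid.PushoutI (fun _ : I => φ) →* Monoid.PushoutI (fun _ : I => φ) :=
  Monoid.PushoutI.lift (fun i => Monoid.PushoutI.of (φ := fun _ : I => φ) (e i))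
    (Monoid.PushoutI.base _) fun i => Monoid.PushoutI.of_comp_eq_base (φ := fun _ : I => φ) (e i)

theorem reindexCopies_of (φ : H →* G) (e : I → I) (i : I) (g : G) :
    reindexCopies φ e (Monoid.PushoutI.of i g) = Monoid.PushoutI.of (e i) g :=
  Monoid.PushoutI.lift_of (φ := fun _ : I => φ) ..

theorem reindexCopies_base (φ : H →* G) (e : I → I) (h : H) :
    reindexCopies φ e (Monoid.PushoutI.base _ h) = Monoid.PushoutI.base _ h :=
  Monoid.PushoutI.lift_base (φ := fun _ : I => φ) ..

theorem reindexCopies_comp_eq_id (φ : H →* G) {e e' : I → I} (h : Function.LeftInverse e e') :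
    (reindexCopies φ e).comp (reindexCopies φ e') = MonoidHom.id _ :=
  Monoid.PushoutI.hom_ext
    (fun i => MonoidHom.ext fun g => by simp [reindexCopies_of, h i])
    (MonoidHom.ext fun g => by simp [reindexCopies_base])

/-- The automorphism of an amalgam of copies of one group that permutes the copies. -/
def permCopies (φ : H →* G) (e : Equiv.Perm I) : MulAut (Monoid.PushoutI fun _ : I => φ) :=
  (reindexCopies φ e).toMulEquiv (reindexCopies φ e.symm)
    (reindexCopies_comp_eq_id φ e.symm_apply_apply) (reindexCopies_comp_eq_id φ e.apply_symm_apply)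

theorem conj_baseCosetGen_inr (C : Subgroup A) (i : I) (c : C) :
    MulAut.conj (baseCosetGen C i) (SemidirectProduct.inr c.1) = SemidirectProduct.inr c.1 := by
  have hsmul : c.1 • ((1 : A) : A ⧸ C) = (1 : A) := QuotientGroup.eq.2 (by simp)
  rw [MulAut.conj_apply, mul_inv_eq_iff_eq_mul]
  ext1 <;> simp [baseCosetGen, FreeGroup.of, freeGroupAut_mk, hsmul]

/-- The homomorphism from an amalgam of copies of `A` that sends them to conjugates of `A` by the
generators at the trivial coset. -/
def copiesHom (C : Subgroup A) (I : Type*) :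
    Monoid.PushoutI (fun _ : I => C.subtype) →* CosetSemidirectProduct C I :=
  Monoid.PushoutI.lift
    (fun i => (MulAut.conj (baseCosetGen C i)).toMonoidHom.comp SemidirectProduct.inr)
    (SemidirectProduct.inr.comp C.subtype) fun i => MonoidHom.ext (conj_baseCosetGen_inr C i)

theorem copiesHom_of (C : Subgroup A) (i : I) (a : A) :
    copiesHom C I (Monoid.PushoutI.of i a) =
      baseCosetGen C i * SemidirectProduct.inr a * (baseCosetGen C i)⁻¹ :=
  Monoid.PushoutI.lift_of (φ := fun _ : I => C.subtype) ..

theorem copiesHom_base (C : Subgroup A) (c : C) :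
    copiesHom C I (Monoid.PushoutI.base _ c) = SemidirectProduct.inr c.1 :=
  Monoid.PushoutI.lift_base (φ := fun _ : I => C.subtype) ..

theorem injective_copiesHom (C : Subgroup A) [Nonempty I] : Function.Injective (copiesHom C I) := by
  classical
  obtain ⟨i₀⟩ := ‹Nonempty I›
  let τ (i : I) := permCopies C.subtype (Equiv.swap i₀ i)
  have hτ_of (i : I) (a : A) : τ i (Monoid.PushoutI.of i₀ a) = Monoid.PushoutI.of i a :=
    (reindexCopies_of ..).trans (by rw [Equiv.swap_apply_left])
  have hτ_base (i : I) (c : C) : τ i (Monoid.PushoutI.base _ c) = Monoid.PushoutI.base _ c :=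
    reindexCopies_base C.subtype (Equiv.swap i₀ i) c
  have hof (c : C) : Monoid.PushoutI.of (φ := fun _ : I => C.subtype) i₀ c.1 =
      Monoid.PushoutI.base _ c := Monoid.PushoutI.of_apply_eq_base (fun _ : I => C.subtype) i₀ c
  -- A left inverse with values in the holomorph of the amalgam, where the `i`-th copy is the
  -- conjugate of the `i₀`-th one by the automorphism that swaps them.
  obtain ⟨Ψ, hΨ_inr, hΨ_gen⟩ := exists_lift_cosetSemidirectProduct (C := C)
    ((SemidirectProduct.inl (φ := MonoidHom.id _)).comp
      (Monoid.PushoutI.of (φ := fun _ : I => C.subtype) i₀))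
    (fun i => SemidirectProduct.inr (τ i)) fun i c hc => by
      ext1 <;> simp [hof ⟨c, hc⟩, hτ_base]
  have hΨ_copiesHom : Ψ.comp (copiesHom C I) = SemidirectProduct.inl := by
    refine Monoid.PushoutI.hom_ext (fun i => MonoidHom.ext fun a => ?_) (MonoidHom.ext fun c => ?_)
    · simp only [MonoidHom.comp_apply, copiesHom_of, map_mul, map_inv, hΨ_inr, hΨ_gen]
      rw [← map_inv, ← SemidirectProduct.inl_aut, MonoidHom.id_apply, hτ_of]
    · simp [copiesHom_base, hΨ_inr, hof]
  refine Function.Injective.of_comp (f := Ψ) ?_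
  rw [← MonoidHom.coe_comp, hΨ_copiesHom]
  exact SemidirectProduct.inl_injective

end Amalgam

/-- Let `A` be GTF with `C ≤ A` relatively torsion-free, and let `G = *_C A` be the
amalgam of copies of `A` (index set of cardinality ≥ 2) over `C`.  The family
`{NSS_A({a}) : a ≠ 1}` (one copy for each factor) consists of normal subsemigroups,
covers `A \ {1}`, has matching `C`-intersections across factors, and consequently `G`
is GTF. -/
theorem copies_amalgam_GTF {A : Type*} [Group A] (C : Subgroup A)
    {I : Type*} (i₀ i₁ : I) (hI : i₀ ≠ i₁)
    (hGTF : IsGTF A)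
    (hRTF : ∀ g : A, g ∉ C → ∀ l : List A, l ≠ [] → (∀ c ∈ l, c ∈ C) →
      (l.map fun c => g * c).prod ≠ 1) :
    (∀ a : A, a ≠ 1 → IsNormalSubsemigroup (nss A {a})) ∧
    ({x : A | x ≠ 1} = ⋃ a ∈ {a : A | a ≠ 1}, nss A {a}) ∧
    (∀ a : A, a ≠ 1 → ∃ b : A, b ≠ 1 ∧
      ∀ h : C, (h : A) ∈ nss A {a} ↔ (h : A) ∈ nss A {b}) ∧
    IsGTF (Monoid.PushoutI (fun _ : I => C.subtype)) := by
  refine ⟨fun a _ => isNormalSubsemigroup_nss {a}, hGTF.setOf_ne_one_eq_biUnion_nss,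
    fun a ha => ⟨a, ha, fun _ => Iff.rfl⟩, ?_⟩
  have : Nonempty I := ⟨i₀⟩
  have hcosets : IsRTFAction A (Σ _ : I, A ⧸ C) := IsRTF.isRTFAction_sigma_quotient hRTF I
  exact (hGTF.semidirectProduct_freeGroupAut hcosets).of_injective (copiesHom C I)
    (injective_copiesHom C)
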